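/- arXiv:1909.05758 — 2 statements merged into one kernel-verified Lean document; each statement's English description precedes it below -/
import Mathlib

section
/- Let A and B be finite types and let J and K be positive definite matrices indexed by (A×B)×(A×B). Then sup{ tr D_op((√ρ ⊗ I_B) J (√ρ ⊗ I_B), (√ρ ⊗ I_B) K (√ρ ⊗ I_B)) : ρ a positive definite density matrix on A } = λ_max( tr_B D_op(J, K) ). (This is the closed-form expression for the Belavkin–Staszewski channel divergence in terms of the Choi matrices J and K.) -/
open Matrix Kronecker ComplexOrder

/-- The Loewner order: `A ≤ B` iff `B - A` is positive semidefinite. -/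
def Loewner {n : Type*} [Fintype n] (A B : Matrix n n ℂ) : Prop := (B - A).PosSemidef

/-- Real matrix power via the spectral decomposition, with the convention `0 ^ β = 0`
(so negative powers are Moore–Penrose pseudo-inverses on the support); defined to be `0`
on non-Hermitian matrices. -/
noncomputable def mpow {n : Type*} [Fintype n] [DecidableEq n] (A : Matrix n n ℂ) (β : ℝ) :
    Matrix n n ℂ :=
  if hA : A.IsHermitian then
    (hA.eigenvectorUnitary : Matrix n n ℂ) *
      Matrix.diagonal (fun i =>
        (Complex.ofReal (if hA.eigenvalues i = 0 then 0 else (hA.eigenvalues i) ^ β))) *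
      (star (hA.eigenvectorUnitary : Matrix n n ℂ))
  else 0

/-- Matrix logarithm via the spectral decomposition (with `Real.log 0 = 0` on the kernel);
defined to be `0` on non-Hermitian matrices. -/
noncomputable def mlog {n : Type*} [Fintype n] [DecidableEq n] (A : Matrix n n ℂ) :
    Matrix n n ℂ :=
  if hA : A.IsHermitian then
    (hA.eigenvectorUnitary : Matrix n n ℂ) *
      Matrix.diagonal (fun i => (Complex.ofReal (Real.log (hA.eigenvalues i)))) *
      (star (hA.eigenvectorUnitary : Matrix n n ℂ))
  else 0

/-- Weighted matrix geometric mean `G_β(X,Y) = X^{1/2} (X^{-1/2} Y X^{-1/2})^β X^{1/2}`. -/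
noncomputable def geomMean {n : Type*} [Fintype n] [DecidableEq n] (β : ℝ)
    (X Y : Matrix n n ℂ) : Matrix n n ℂ :=
  mpow X (1/2) * mpow (mpow X (-(1/2)) * Y * mpow X (-(1/2))) β * mpow X (1/2)

/-- Operator relative entropy `D_op(X,Y) = X^{1/2} log(X^{1/2} Y⁻¹ X^{1/2}) X^{1/2}`. -/
noncomputable def Dop {n : Type*} [Fintype n] [DecidableEq n] (X Y : Matrix n n ℂ) :
    Matrix n n ℂ :=
  mpow X (1/2) * mlog (mpow X (1/2) * Y⁻¹ * mpow X (1/2)) * mpow X (1/2)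

/-- Geometric Rényi divergence `D̂_α(ρ‖σ) = (α-1)⁻¹ log tr G_{1-α}(ρ,σ)`. -/
noncomputable def Dhat {n : Type*} [Fintype n] [DecidableEq n] (α : ℝ)
    (ρ σ : Matrix n n ℂ) : ℝ :=
  (α - 1)⁻¹ * Real.log ((geomMean (1 - α) ρ σ).trace.re)

/-- Max-relative entropy `D_max(ρ‖σ) = log inf {t : ρ ≤ t σ}`. -/
noncomputable def Dmax {n : Type*} [Fintype n] (ρ σ : Matrix n n ℂ) : ℝ :=
  Real.log (sInf {t : ℝ | Loewner ρ (t • σ)})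

/-- Umegaki relative entropy `D(ρ‖σ) = tr[ρ (log ρ - log σ)]`. -/
noncomputable def Dum {n : Type*} [Fintype n] [DecidableEq n] (ρ σ : Matrix n n ℂ) : ℝ :=
  ((ρ * (mlog ρ - mlog σ)).trace).re

/-- Sandwiched Rényi divergence. -/
noncomputable def Dsand {n : Type*} [Fintype n] [DecidableEq n] (α : ℝ)
    (ρ σ : Matrix n n ℂ) : ℝ :=
  (α - 1)⁻¹ *
    Real.log ((mpow (mpow σ ((1 - α)/(2*α)) * ρ * mpow σ ((1 - α)/(2*α))) α).trace.re)

/-- Petz Rényi divergence. -/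
noncomputable def Dpetz {n : Type*} [Fintype n] [DecidableEq n] (α : ℝ)
    (ρ σ : Matrix n n ℂ) : ℝ :=
  (α - 1)⁻¹ * Real.log ((mpow ρ α * mpow σ (1 - α)).trace.re)

/-- Partial trace over the second tensor factor. -/
noncomputable def ptrB {A B : Type*} [Fintype B] (M : Matrix (A × B) (A × B) ℂ) :
    Matrix A A ℂ :=
  Matrix.of fun a a' => ∑ b, M (a, b) (a', b)

/-- Partial transpose on the second tensor factor. -/
def ptB {A B : Type*} (M : Matrix (A × B) (A × B) ℂ) : Matrix (A × B) (A × B) ℂ :=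
  Matrix.of fun x y => M (x.1, y.2) (y.1, x.2)

/-- Largest eigenvalue of a Hermitian matrix (`0` on non-Hermitian matrices). -/
noncomputable def lamMax {n : Type*} [Fintype n] [DecidableEq n] (M : Matrix n n ℂ) : ℝ :=
  if hM : M.IsHermitian then ⨆ i, hM.eigenvalues i else 0

/-- The action `Λ_J(ρ)` on the `A`-subsystem of the CP map with Choi matrix `J`. -/
noncomputable def chanApply {R A B : Type*} [Fintype A] (J : Matrix (A × B) (A × B) ℂ)
    (ρ : Matrix (R × A) (R × A) ℂ) : Matrix (R × B) (R × B) ℂ :=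
  Matrix.of fun x y => ∑ a, ∑ a', ρ (x.1, a) (y.1, a') * J (a, x.2) (a', y.2)

/-- Cone of separable operators: finite sums of Kronecker products of PSD matrices. -/
def SEPcone (A B : Type*) [Fintype A] [Fintype B] : Set (Matrix (A × B) (A × B) ℂ) :=
  { M | ∃ (k : ℕ) (P : Fin k → Matrix A A ℂ) (Q : Fin k → Matrix B B ℂ),
      (∀ i, (P i).PosSemidef) ∧ (∀ i, (Q i).PosSemidef) ∧ M = ∑ i, (P i) ⊗ₖ (Q i) }

/-- Trace norm `‖X‖₁ = tr √(X* X)`. -/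
noncomputable def traceNorm {n : Type*} [Fintype n] [DecidableEq n] (X : Matrix n n ℂ) : ℝ :=
  ((mpow (Xᴴ * X) (1/2)).trace).re

/-- Moore–Penrose pseudo-inverse of a PSD matrix. -/
noncomputable def mpinv {n : Type*} [Fintype n] [DecidableEq n] (M : Matrix n n ℂ) :
    Matrix n n ℂ :=
  mpow M (-1)

/-- Link product of Choi matrices (Choi matrix of the composed map). -/
noncomputable def linkProd {A B C : Type*} [Fintype B] (J₁ : Matrix (A × B) (A × B) ℂ)
    (J₂ : Matrix (B × C) (B × C) ℂ) : Matrix (A × C) (A × C) ℂ :=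
  Matrix.of fun x y => ∑ b, ∑ b', J₁ (x.1, b) (y.1, b') * J₂ (b, x.2) (b', y.2)

lemma aux_conj_diag {n : Type*} [Fintype n] [DecidableEq n] (f : ℝ → ℝ)
    (U V : Matrix n n ℂ) (hU : star U * U = 1) (hV : star V * V = 1) (a b : n → ℝ)
    (h : U * diagonal (fun i => (a i : ℂ)) * star U = V * diagonal (fun i => (b i : ℂ)) * star V) :
    U * diagonal (fun i => (f (a i) : ℂ)) * star U
      = V * diagonal (fun i => (f (b i) : ℂ)) * star V := by
  have hU' : U * star U = 1 := mul_eq_one_comm.mp hU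
  have hV' : V * star V = 1 := mul_eq_one_comm.mp hV
  have h1 : (star V * U) * diagonal (fun i => (a i : ℂ))
      = diagonal (fun i => (b i : ℂ)) * (star V * U) := by
    calc (star V * U) * diagonal (fun i => (a i : ℂ))
        = star V * (U * diagonal (fun i => (a i : ℂ)) * star U) * U := by
          simp only [Matrix.mul_assoc, hU, Matrix.mul_one]
      _ = (star V * V) * diagonal (fun i => (b i : ℂ)) * (star V * U) := by
          rw [h]; simp only [Matrix.mul_assoc]
      _ = _ := by rw [hV, Matrix.one_mul]
  have h2 : (star V * U) * diagonal (fun i => (f (a i) : ℂ))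
      = diagonal (fun i => (f (b i) : ℂ)) * (star V * U) := by
    ext i j
    have := congrFun (congrFun h1 i) j
    rw [mul_diagonal, diagonal_mul] at this ⊢
    by_cases hz : (star V * U) i j = 0
    · simp [hz]
    · have hab : (a j : ℂ) = b i := by
        apply mul_left_cancel₀ hz; rw [this, mul_comm]
      have hab' : a j = b i := by exact_mod_cast hab
      rw [hab', mul_comm]
  calc U * diagonal (fun i => (f (a i) : ℂ)) * star U
      = (V * star V) * U * diagonal (fun i => (f (a i) : ℂ)) * star U := by
        rw [hV', Matrix.one_mul]
    _ = V * ((star V * U) * diagonal (fun i => (f (a i) : ℂ))) * star U := by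
        simp only [Matrix.mul_assoc]
    _ = V * diagonal (fun i => (f (b i) : ℂ)) * star V * (U * star U) := by
        rw [h2]; simp only [Matrix.mul_assoc]
    _ = _ := by rw [hU', Matrix.mul_one]

lemma aux_spec {n : Type*} [Fintype n] [DecidableEq n] {A : Matrix n n ℂ} (hA : A.IsHermitian) :
    A = (hA.eigenvectorUnitary : Matrix n n ℂ) * diagonal (fun i => (hA.eigenvalues i : ℂ)) *
      star (hA.eigenvectorUnitary : Matrix n n ℂ) := by
  have := hA.spectral_theorem
  rw [Unitary.conjStarAlgAut_apply] at this
  exact this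

lemma aux_star_U {n : Type*} [Fintype n] [DecidableEq n] {A : Matrix n n ℂ} (hA : A.IsHermitian) :
    star (hA.eigenvectorUnitary : Matrix n n ℂ) * (hA.eigenvectorUnitary : Matrix n n ℂ) = 1 :=
  Unitary.coe_star_mul_self _

lemma aux_mlog_conj {n : Type*} [Fintype n] [DecidableEq n] {M U : Matrix n n ℂ}
    (hM : M.IsHermitian) (hU : star U * U = 1) :
    mlog (U * M * star U) = U * mlog M * star U := by
  have hH : (U * M * star U).IsHermitian := by
    have := isHermitian_mul_mul_conjTranspose U hM
    exact this
  rw [mlog, mlog, dif_pos hH, dif_pos hM]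
  have key := aux_conj_diag Real.log (hH.eigenvectorUnitary : Matrix n n ℂ)
    (U * (hM.eigenvectorUnitary : Matrix n n ℂ)) (aux_star_U hH)
    (by rw [star_mul, Matrix.mul_assoc, ← Matrix.mul_assoc (star U), hU, Matrix.one_mul,
          aux_star_U hM])
    hH.eigenvalues hM.eigenvalues
    (by
      rw [← aux_spec hH]
      conv_lhs => rw [aux_spec hM]
      simp only [star_mul, Matrix.mul_assoc])
  rw [key]
  simp only [star_mul, Matrix.mul_assoc]

lemma aux_mlog_herm {n : Type*} [Fintype n] [DecidableEq n] (M : Matrix n n ℂ) :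
    (mlog M).IsHermitian := by
  unfold mlog
  split_ifs with h
  · apply isHermitian_mul_mul_conjTranspose
    rw [IsHermitian, diagonal_conjTranspose]
    congr 1
    ext i
    simp
  · exact isHermitian_zero

lemma aux_sqrt_herm {n : Type*} [Fintype n] [DecidableEq n] (M : Matrix n n ℂ) (β : ℝ) :
    (mpow M β).IsHermitian := by
  unfold mpow
  split_ifs with h
  · apply isHermitian_mul_mul_conjTranspose
    rw [IsHermitian, diagonal_conjTranspose]
    congr 1
    ext i
    simp
  · exact isHermitian_zero

lemma aux_sqrt_sq {n : Type*} [Fintype n] [DecidableEq n] {M : Matrix n n ℂ} (hM : M.PosDef) :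
    mpow M (1/2) * mpow M (1/2) = M := by
  conv_rhs => rw [aux_spec hM.1]
  rw [mpow, dif_pos hM.1]
  have e : ∀ (U D : Matrix n n ℂ), star U * U = 1 →
      (U * D * star U) * (U * D * star U) = U * (D * D) * star U := by
    intro U D h
    calc _ = U * D * (star U * U) * D * star U := by simp only [Matrix.mul_assoc]
      _ = _ := by rw [h]; simp only [Matrix.mul_assoc, Matrix.one_mul]
  rw [e _ _ (aux_star_U hM.1), diagonal_mul_diagonal]
  congr 3
  ext i
  have hp := hM.eigenvalues_pos i
  rw [if_neg hp.ne', ← Complex.ofReal_mul, ← Real.rpow_add hp]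
  norm_num

lemma aux_Dop_conj {n : Type*} [Fintype n] [DecidableEq n] {X Y T : Matrix n n ℂ}
    (hX : X.PosDef) (hY : Y.PosDef) (hT : IsUnit T) (hTH : T.IsHermitian) :
    Dop (T * X * T) (T * Y * T) = T * Dop X Y * T := by
  have hX1 : (T * X * T).PosDef := by
    have h := (Matrix.IsUnit.posDef_star_left_conjugate_iff (x := X) hT).mpr hX
    rwa [star_eq_conjTranspose, hTH.eq] at h
  have hS := aux_sqrt_sq hX
  have hS1 := aux_sqrt_sq hX1
  have hSH := aux_sqrt_herm X (1/2)
  have hS1H := aux_sqrt_herm (T * X * T) (1/2)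
  unfold Dop
  generalize mpow X (1/2) = S at *
  generalize mpow (T * X * T) (1/2) = S1 at *
  have uX1 : IsUnit S1 := by
    have : IsUnit (S1 * S1) := by rw [hS1]; exact hX1.isUnit
    exact isUnit_of_mul_isUnit_left this
  have dT : IsUnit T.det := (isUnit_iff_isUnit_det _).mp hT
  have d1 : IsUnit S1.det := (isUnit_iff_isUnit_det _).mp uX1
  obtain ⟨U, hUdef⟩ : ∃ U, U = S1⁻¹ * T * S := ⟨_, rfl⟩
  have hTS : T * S = S1 * U := by
    rw [hUdef, Matrix.mul_assoc, mul_nonsing_inv_cancel_left _ _ d1]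
  have hST : S * T = star U * S1 := by
    have := congrArg conjTranspose hTS
    rw [conjTranspose_mul, conjTranspose_mul, hSH.eq, hTH.eq, hS1H.eq] at this
    exact this
  have hUU : U * star U = 1 := by
    have h1 : S1 * (U * star U) * S1 = S1 * 1 * S1 := by
      calc S1 * (U * star U) * S1 = (S1 * U) * (star U * S1) := by simp only [Matrix.mul_assoc]
        _ = T * (S * S) * T := by rw [← hTS, ← hST]; simp only [Matrix.mul_assoc]
        _ = _ := by rw [hS, Matrix.mul_one, hS1]
    exact uX1.mul_left_cancel (uX1.mul_right_cancel h1)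
  have hUU' : star U * U = 1 := mul_eq_one_comm.mp hUU
  have e1 : T⁻¹ * S1 = S * star U := by
    calc T⁻¹ * S1 = T⁻¹ * (S1 * U) * star U := by
          rw [Matrix.mul_assoc, Matrix.mul_assoc, hUU, Matrix.mul_one]
      _ = _ := by rw [← hTS, nonsing_inv_mul_cancel_left _ _ dT]
  have e2 : S1 * T⁻¹ = U * S := by
    calc S1 * T⁻¹ = U * (star U * S1) * T⁻¹ := by
          rw [← Matrix.mul_assoc, hUU, Matrix.one_mul]
      _ = _ := by rw [← hST, ← Matrix.mul_assoc, mul_nonsing_inv_cancel_right _ _ dT]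
  have e3 : S1 * (T * Y * T)⁻¹ * S1 = U * (S * Y⁻¹ * S) * star U := by
    calc S1 * (T * Y * T)⁻¹ * S1 = (S1 * T⁻¹) * Y⁻¹ * (T⁻¹ * S1) := by
          rw [Matrix.mul_inv_rev, Matrix.mul_inv_rev]; simp only [Matrix.mul_assoc]
      _ = _ := by rw [e1, e2]; simp only [Matrix.mul_assoc]
  have hMH : (S * Y⁻¹ * S).IsHermitian := by
    have := isHermitian_mul_mul_conjTranspose S hY.1.inv
    rwa [hSH.eq] at this
  rw [e3, aux_mlog_conj hMH hUU']
  calc S1 * (U * mlog (S * Y⁻¹ * S) * star U) * S1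
      = (S1 * U) * mlog (S * Y⁻¹ * S) * (star U * S1) := by simp only [Matrix.mul_assoc]
    _ = _ := by rw [← hTS, ← hST]; simp only [Matrix.mul_assoc]

lemma aux_Dop_herm {n : Type*} [Fintype n] [DecidableEq n] (X Y : Matrix n n ℂ) :
    (Dop X Y).IsHermitian := by
  have := isHermitian_mul_mul_conjTranspose (mpow X (1/2))
    (aux_mlog_herm (mpow X (1/2) * Y⁻¹ * mpow X (1/2)))
  rwa [(aux_sqrt_herm X (1/2)).eq] at this

lemma aux_ptrB_herm {A B : Type*} [Fintype B] {M : Matrix (A × B) (A × B) ℂ}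
    (h : M.IsHermitian) : (ptrB M).IsHermitian := by
  ext i j
  simp only [ptrB, conjTranspose_apply, of_apply, star_sum]
  exact Finset.sum_congr rfl fun b _ => h.apply _ _

lemma aux_trace_ptrB {A B : Type*} [Fintype A] [DecidableEq A] [Fintype B] [DecidableEq B]
    (ρ : Matrix A A ℂ) (M : Matrix (A × B) (A × B) ℂ) :
    ((ρ ⊗ₖ (1 : Matrix B B ℂ)) * M).trace = (ρ * ptrB M).trace := by
  simp only [Matrix.trace, Matrix.diag_apply, Matrix.mul_apply, ptrB, of_apply,
    Fintype.sum_prod_type, kroneckerMap_apply, Matrix.one_apply, mul_ite, mul_one, mul_zero,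
    ite_mul, zero_mul, Finset.sum_ite_eq, Finset.mem_univ, if_true, Finset.mul_sum]
  exact Finset.sum_congr rfl fun a _ => Finset.sum_comm

lemma aux_value {A B : Type*} [Fintype A] [DecidableEq A] [Fintype B] [DecidableEq B]
    {J K : Matrix (A × B) (A × B) ℂ} (hJ : J.PosDef) (hK : K.PosDef)
    {ρ : Matrix A A ℂ} (hρ : ρ.PosDef) :
    (Dop
      ((mpow ρ (1/2) ⊗ₖ (1 : Matrix B B ℂ)) * J * (mpow ρ (1/2) ⊗ₖ (1 : Matrix B B ℂ)))
      ((mpow ρ (1/2) ⊗ₖ (1 : Matrix B B ℂ)) * K *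
        (mpow ρ (1/2) ⊗ₖ (1 : Matrix B B ℂ)))).trace = (ρ * ptrB (Dop J K)).trace := by
  have hR := aux_sqrt_sq hρ
  have hRH := aux_sqrt_herm ρ (1/2)
  have hTT : (mpow ρ (1/2) ⊗ₖ (1 : Matrix B B ℂ)) * (mpow ρ (1/2) ⊗ₖ (1 : Matrix B B ℂ))
      = ρ ⊗ₖ (1 : Matrix B B ℂ) := by
    rw [← mul_kronecker_mul, hR, Matrix.one_mul]
  have hu : IsUnit (mpow ρ (1/2) ⊗ₖ (1 : Matrix B B ℂ)) := by
    have : IsUnit ((mpow ρ (1/2) ⊗ₖ (1 : Matrix B B ℂ)) *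
        (mpow ρ (1/2) ⊗ₖ (1 : Matrix B B ℂ))) := by
      rw [hTT]
      exact (hρ.kronecker PosDef.one).isUnit
    exact isUnit_of_mul_isUnit_left this
  have hTH : (mpow ρ (1/2) ⊗ₖ (1 : Matrix B B ℂ)).IsHermitian := by
    rw [IsHermitian, conjTranspose_kronecker, hRH.eq, conjTranspose_one]
  rw [aux_Dop_conj hJ hK hu hTH, Matrix.trace_mul_comm, ← Matrix.mul_assoc, hTT, aux_trace_ptrB]

lemma aux_sup {A : Type*} [Fintype A] [DecidableEq A] {H : Matrix A A ℂ} (hH : H.IsHermitian) :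
    sSup {x : ℝ | ∃ ρ : Matrix A A ℂ, ρ.PosDef ∧ ρ.trace = 1 ∧ x = (ρ * H).trace.re}
      = lamMax H := by
  rw [lamMax, dif_pos hH]
  have hs := aux_spec hH
  have hV := aux_star_U hH
  generalize (hH.eigenvectorUnitary : Matrix A A ℂ) = V at hs hV
  generalize hH.eigenvalues = l at hs
  have hV' : V * star V = 1 := mul_eq_one_comm.mp hV
  have hVu : IsUnit V := IsUnit.of_mul_eq_one _ hV'
  rcases isEmpty_or_nonempty A with hA | hA
  · rw [Real.iSup_of_isEmpty]
    convert Real.sSup_empty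
    ext x
    simp [Matrix.trace]
  have val : ∀ ρ : Matrix A A ℂ, (ρ * H).trace.re = ∑ i, ((star V * ρ * V) i i).re * l i := by
    intro ρ
    rw [hs, ← Matrix.mul_assoc, Matrix.trace_mul_comm, ← Matrix.mul_assoc, ← Matrix.mul_assoc]
    simp [Matrix.trace, mul_diagonal]
  have tr : ∀ ρ : Matrix A A ℂ, (star V * ρ * V).trace = ρ.trace := by
    intro ρ
    rw [Matrix.trace_mul_comm, ← Matrix.mul_assoc, hV', Matrix.one_mul]
  have hbdd : BddAbove (Set.range l) := (Set.finite_range l).bddAbove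
  obtain ⟨i0, hi0⟩ := Finite.exists_max l
  have hM : ⨆ i, l i = l i0 := le_antisymm (ciSup_le hi0) (le_ciSup hbdd i0)
  rw [hM]
  have hn : (0:ℝ) < Fintype.card A := by exact_mod_cast Fintype.card_pos
  -- density matrices diagonal in the eigenbasis
  have cons : ∀ q : A → ℝ, (∀ i, 0 < q i) → ∑ i, q i = 1 →
      (∑ i, q i * l i) ∈ {x : ℝ | ∃ ρ : Matrix A A ℂ, ρ.PosDef ∧ ρ.trace = 1 ∧
        x = (ρ * H).trace.re} := by
    intro q hq hq1
    have e : star V * (V * diagonal (fun i => (q i : ℂ)) * star V) * V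
        = diagonal (fun i => (q i : ℂ)) := by
      calc _ = (star V * V) * diagonal (fun i => (q i : ℂ)) * (star V * V) := by
            simp only [Matrix.mul_assoc]
        _ = _ := by rw [hV, Matrix.one_mul, Matrix.mul_one]
    refine ⟨V * diagonal (fun i => (q i : ℂ)) * star V, ?_, ?_, ?_⟩
    · rw [Matrix.IsUnit.posDef_star_right_conjugate_iff hVu, posDef_diagonal_iff]
      intro i
      exact_mod_cast hq i
    · rw [← tr, e, trace_diagonal]
      exact_mod_cast hq1
    · rw [val, e]
      simp
  obtain ⟨n, hnd⟩ : ∃ n : ℝ, n = Fintype.card A := ⟨_, rfl⟩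
  rw [← hnd] at hn
  have hsumc : ∑ _i : A, (1 / n) = 1 := by
    rw [Finset.sum_const, Finset.card_univ, nsmul_eq_mul, ← hnd]; field_simp
  apply csSup_eq_of_forall_le_of_forall_lt_exists_gt
  · exact ⟨_, cons (fun _ => 1 / n) (fun _ => by positivity) hsumc⟩
  · rintro x ⟨ρ, hρ, hρ1, rfl⟩
    have hP : (star V * ρ * V).PosDef :=
      (Matrix.IsUnit.posDef_star_left_conjugate_iff hVu).mpr hρ
    have h1 : ∑ i, ((star V * ρ * V) i i).re = 1 := by
      have := congrArg Complex.re ((tr ρ).trans hρ1)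
      simpa [Matrix.trace] using this
    rw [val]
    calc ∑ i, ((star V * ρ * V) i i).re * l i ≤ ∑ i, ((star V * ρ * V) i i).re * l i0 := by
          apply Finset.sum_le_sum
          intro i _
          exact mul_le_mul_of_nonneg_left (hi0 i) (Complex.pos_iff.mp (hP.diag_pos (i := i))).1.le
      _ = l i0 := by rw [← Finset.sum_mul, h1, one_mul]
  · intro w hw
    obtain ⟨g, hg⟩ : ∃ g, g = l i0 - ∑ i, (1 / n) * l i := ⟨_, rfl⟩
    have hg0 : 0 ≤ g := by
      have : ∑ i, (1 / n) * l i ≤ ∑ i : A, (1 / n) * l i0 :=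
        Finset.sum_le_sum fun i _ => mul_le_mul_of_nonneg_left (hi0 i) (by positivity)
      rw [← Finset.sum_mul, hsumc] at this
      linarith
    obtain ⟨δ, hδ⟩ : ∃ δ, δ = l i0 - w := ⟨_, rfl⟩
    have hδ0 : 0 < δ := by linarith
    obtain ⟨ε, hε⟩ : ∃ ε, ε = δ / (δ + g + 1) := ⟨_, rfl⟩
    have hε0 : 0 < ε := by rw [hε]; positivity
    have hε1 : ε < 1 := by rw [hε, div_lt_one (by positivity)]; linarith
    have hεg : ε * g < δ := by
      rw [hε, div_mul_eq_mul_div, div_lt_iff₀ (by positivity)]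
      nlinarith
    refine ⟨_, cons (fun i => (1 - ε) * (if i = i0 then 1 else 0) + ε * (1 / n)) ?_ ?_, ?_⟩
    · intro i
      have : 0 < ε * (1 / n) := by positivity
      have h2 : 0 ≤ (1 - ε) * (if i = i0 then (1:ℝ) else 0) :=
        mul_nonneg (by linarith) (by split_ifs <;> norm_num)
      linarith
    · rw [Finset.sum_add_distrib, ← Finset.mul_sum, ← Finset.mul_sum, hsumc]
      simp
    · have : ∑ i, ((1 - ε) * (if i = i0 then 1 else 0) + ε * (1 / n)) * l i
          = (1 - ε) * l i0 + ε * ∑ i, (1 / n) * l i := by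
        simp only [add_mul, Finset.sum_add_distrib, mul_assoc, ← Finset.mul_sum]
        simp
      rw [this]
      nlinarith

/-- closed-form expression of the Belavkin–Staszewski channel divergence:
the supremum over positive definite density matrices `ρ` on `A` of
`tr D_op((√ρ ⊗ I) J (√ρ ⊗ I), (√ρ ⊗ I) K (√ρ ⊗ I))` equals `λ_max(tr_B D_op(J, K))`. -/
theorem BS_channel_divergence_closed_form {A B : Type*} [Fintype A] [DecidableEq A]
    [Fintype B] [DecidableEq B]
    (J K : Matrix (A × B) (A × B) ℂ) (hJ : J.PosDef) (hK : K.PosDef) :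
    sSup {x : ℝ | ∃ ρ : Matrix A A ℂ, ρ.PosDef ∧ ρ.trace = 1 ∧
        x = (Dop
              ((mpow ρ (1/2) ⊗ₖ (1 : Matrix B B ℂ)) * J * (mpow ρ (1/2) ⊗ₖ (1 : Matrix B B ℂ)))
              ((mpow ρ (1/2) ⊗ₖ (1 : Matrix B B ℂ)) * K *
                (mpow ρ (1/2) ⊗ₖ (1 : Matrix B B ℂ)))).trace.re} =
      lamMax (ptrB (Dop J K)) := by
  rw [← aux_sup (aux_ptrB_herm (aux_Dop_herm J K))]
  congr 1
  ext x
  constructor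
  · rintro ⟨ρ, h1, h2, rfl⟩
    exact ⟨ρ, h1, h2, by rw [aux_value hJ hK h1]⟩
  · rintro ⟨ρ, h1, h2, rfl⟩
    exact ⟨ρ, h1, h2, by rw [aux_value hJ hK h1]⟩
end

section
/- Let A₁, B₁, A₂, B₂ be finite types, let J₁, K₁ be positive semidefinite matrices indexed by (A₁×B₁)×(A₁×B₁), let J₂, K₂ be positive semidefinite matrices indexed by (A₂×B₂)×(A₂×B₂), and let α ∈ (1,2]. Let Ĵ (respectively K̂) denote J₁ ⊗ J₂ (respectively K₁ ⊗ K₂) reindexed along the canonical bijection (A₁×B₁)×(A₂×B₂) ≃ (A₁×A₂)×(B₁×B₂). Then λ_max( tr_{B₁×B₂} G_{1−α}(Ĵ, K̂) ) = λ_max( tr_{B₁} G_{1−α}(J₁, K₁) ) · λ_max( tr_{B₂} G_{1−α}(J₂, K₂) ). (This expresses the additivity of the geometric Rényi channel divergence under tensor products of channels, in terms of Choi matrices.) -/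
open Matrix Kronecker ComplexOrder

/-- the scalar function underlying `mpow` -/
noncomputable def fpow (β x : ℝ) : ℝ := if x = 0 then 0 else x ^ β

theorem fpow_nonneg (β : ℝ) {x : ℝ} (hx : 0 ≤ x) : 0 ≤ fpow β x := by
  unfold fpow; split_ifs
  · exact le_rfl
  · exact Real.rpow_nonneg hx _

theorem fpow_mul (β : ℝ) {x y : ℝ} (hx : 0 ≤ x) (hy : 0 ≤ y) :
    fpow β (x * y) = fpow β x * fpow β y := by
  unfold fpow
  by_cases h1 : x = 0 <;> by_cases h2 : y = 0 <;> simp [h1, h2, Real.mul_rpow hx hy]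

theorem entry_intertwine {n m : Type*} [Fintype n] [DecidableEq n] [Fintype m] [DecidableEq m]
    (V : Matrix n n ℂ) (e : n → ℝ) (U : Matrix n m ℂ) (d : m → ℝ)
    (hV : Vᴴ * V = 1) (hU : Uᴴ * U = 1)
    (h : V * diagonal (fun i => (e i : ℂ)) * Vᴴ = U * diagonal (fun i => (d i : ℂ)) * Uᴴ)
    (i : n) (j : m) (hW : (Vᴴ * U) i j ≠ 0) : e i = d j := by
  have h2 : diagonal (fun i => (e i : ℂ)) * (Vᴴ * U) = (Vᴴ * U) * diagonal (fun i => (d i : ℂ)) := by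
    calc diagonal (fun i => (e i : ℂ)) * (Vᴴ * U)
        = (Vᴴ * V) * diagonal (fun i => (e i : ℂ)) * (Vᴴ * U) := by rw [hV, Matrix.one_mul]
      _ = Vᴴ * (V * diagonal (fun i => (e i : ℂ)) * Vᴴ) * U := by simp only [Matrix.mul_assoc]
      _ = (Vᴴ * U) * diagonal (fun i => (d i : ℂ)) * (Uᴴ * U) := by
          rw [h]; simp only [Matrix.mul_assoc]
      _ = _ := by rw [hU, Matrix.mul_one]
  have h3 := congrFun (congrFun h2 i) j
  rw [Matrix.diagonal_mul, Matrix.mul_diagonal, mul_comm] at h3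
  exact_mod_cast mul_left_cancel₀ hW h3

theorem herm_spec {n : Type*} [Fintype n] [DecidableEq n] {A : Matrix n n ℂ}
    (hA : A.IsHermitian) :
    A = (hA.eigenvectorUnitary : Matrix n n ℂ) * diagonal (fun i => (hA.eigenvalues i : ℂ)) *
      (hA.eigenvectorUnitary : Matrix n n ℂ)ᴴ := by
  have := hA.spectral_theorem
  rw [Unitary.conjStarAlgAut_apply] at this
  exact this

theorem eu1 {n : Type*} [Fintype n] [DecidableEq n] {A : Matrix n n ℂ}
    (hA : A.IsHermitian) :
    (hA.eigenvectorUnitary : Matrix n n ℂ)ᴴ * (hA.eigenvectorUnitary : Matrix n n ℂ) = 1 :=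
  Unitary.coe_star_mul_self hA.eigenvectorUnitary

theorem eu2 {n : Type*} [Fintype n] [DecidableEq n] {A : Matrix n n ℂ}
    (hA : A.IsHermitian) :
    (hA.eigenvectorUnitary : Matrix n n ℂ) * (hA.eigenvectorUnitary : Matrix n n ℂ)ᴴ = 1 :=
  Unitary.coe_mul_star_self hA.eigenvectorUnitary

theorem mpow_herm {n : Type*} [Fintype n] [DecidableEq n] {A : Matrix n n ℂ}
    (hA : A.IsHermitian) (β : ℝ) :
    mpow A β = (hA.eigenvectorUnitary : Matrix n n ℂ) *
      diagonal (fun i => (fpow β (hA.eigenvalues i) : ℂ)) *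
      (hA.eigenvectorUnitary : Matrix n n ℂ)ᴴ := by
  unfold mpow
  rw [dif_pos hA]
  rfl

theorem isHermitian_of_spec {n m : Type*} [Fintype n] [Fintype m]
    [DecidableEq m] (U : Matrix n m ℂ) (d : m → ℝ) :
    (U * diagonal (fun i => (d i : ℂ)) * Uᴴ).IsHermitian := by
  apply Matrix.isHermitian_mul_mul_conjTranspose
  apply Matrix.isHermitian_diagonal_of_self_adjoint
  ext i
  simp

theorem mpow_spec {n m : Type*} [Fintype n] [DecidableEq n] [Fintype m] [DecidableEq m]
    (A : Matrix n n ℂ) (U : Matrix n m ℂ) (d : m → ℝ) (hU : Uᴴ * U = 1) (hU' : U * Uᴴ = 1)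
    (h : A = U * diagonal (fun i => (d i : ℂ)) * Uᴴ) (β : ℝ) :
    mpow A β = U * diagonal (fun i => (fpow β (d i) : ℂ)) * Uᴴ := by
  have hA : A.IsHermitian := h ▸ isHermitian_of_spec U d
  rw [mpow_herm hA]
  have key := entry_intertwine _ _ U d (eu1 hA) hU ((herm_spec hA).symm.trans h)
  set V := (hA.eigenvectorUnitary : Matrix n n ℂ) with hVdef
  have h2 : diagonal (fun i => (fpow β (hA.eigenvalues i) : ℂ)) * (Vᴴ * U)
      = (Vᴴ * U) * diagonal (fun i => (fpow β (d i) : ℂ)) := by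
    ext i j
    rw [Matrix.diagonal_mul, Matrix.mul_diagonal, mul_comm]
    by_cases hW : (Vᴴ * U) i j = 0
    · simp [hW]
    · rw [key i j hW]
  calc V * diagonal (fun i => (fpow β (hA.eigenvalues i) : ℂ)) * Vᴴ
      = V * diagonal (fun i => (fpow β (hA.eigenvalues i) : ℂ)) * Vᴴ * (U * Uᴴ) := by
        rw [hU', Matrix.mul_one]
    _ = V * (diagonal (fun i => (fpow β (hA.eigenvalues i) : ℂ)) * (Vᴴ * U)) * Uᴴ := by
        simp only [Matrix.mul_assoc]
    _ = (V * Vᴴ) * U * diagonal (fun i => (fpow β (d i) : ℂ)) * Uᴴ := by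
        rw [h2]; simp only [Matrix.mul_assoc]
    _ = _ := by rw [eu2 hA, Matrix.one_mul]

theorem lamMax_spec {n m : Type*} [Fintype n] [DecidableEq n] [Fintype m] [DecidableEq m]
    (A : Matrix n n ℂ) (U : Matrix n m ℂ) (d : m → ℝ) (hU : Uᴴ * U = 1) (hU' : U * Uᴴ = 1)
    (h : A = U * diagonal (fun i => (d i : ℂ)) * Uᴴ) :
    lamMax A = ⨆ i, d i := by
  have hA : A.IsHermitian := h ▸ isHermitian_of_spec U d
  unfold lamMax
  rw [dif_pos hA]
  have key := entry_intertwine _ _ U d (eu1 hA) hU ((herm_spec hA).symm.trans h)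
  set V := (hA.eigenvectorUnitary : Matrix n n ℂ) with hVdef
  have w1 : (Vᴴ * U) * (Uᴴ * V) = 1 := by
    calc (Vᴴ * U) * (Uᴴ * V) = Vᴴ * (U * Uᴴ) * V := by simp only [Matrix.mul_assoc]
      _ = 1 := by rw [hU', Matrix.mul_one, eu1 hA]
  have w2 : (Uᴴ * V) * (Vᴴ * U) = 1 := by
    calc (Uᴴ * V) * (Vᴴ * U) = Uᴴ * (V * Vᴴ) * U := by simp only [Matrix.mul_assoc]
      _ = 1 := by rw [eu2 hA, Matrix.mul_one, hU]
  have hr : Set.range hA.eigenvalues = Set.range d := by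
    ext x
    constructor
    · rintro ⟨i, rfl⟩
      by_contra hc
      have h0 : ∀ j, (Vᴴ * U) i j = 0 := by
        intro j
        by_contra hW
        exact hc ⟨j, (key i j hW).symm⟩
      have := congrFun (congrFun w1 i) i
      rw [Matrix.mul_apply] at this
      simp [h0] at this
    · rintro ⟨j, rfl⟩
      by_contra hc
      have h0 : ∀ i, (Vᴴ * U) i j = 0 := by
        intro i
        by_contra hW
        exact hc ⟨i, key i j hW⟩
      have := congrFun (congrFun w2 j) j
      rw [Matrix.mul_apply] at this
      simp [h0] at this
  change sSup _ = sSup _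
  rw [hr]

theorem kron_spec {n m p : Type*} [Fintype n] [DecidableEq n] [Fintype m] [DecidableEq m]
    (e : n × m ≃ p) (U : Matrix n n ℂ) (V : Matrix m m ℂ) (d : n → ℝ) (c : m → ℝ) :
    Matrix.reindex e e ((U * diagonal (fun i => (d i : ℂ)) * Uᴴ) ⊗ₖ
      (V * diagonal (fun i => (c i : ℂ)) * Vᴴ)) =
    ((U ⊗ₖ V).submatrix e.symm id) * diagonal (fun i : n × m => ((d i.1 * c i.2 : ℝ) : ℂ)) *
      ((U ⊗ₖ V).submatrix e.symm id)ᴴ := by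
  rw [Matrix.mul_kronecker_mul, Matrix.mul_kronecker_mul, Matrix.diagonal_kronecker_diagonal,
    ← Matrix.conjTranspose_kronecker]
  ext i j
  simp [Matrix.mul_apply, Matrix.diagonal]

theorem kron_unit {n m p : Type*} [Fintype n] [DecidableEq n] [Fintype m] [DecidableEq m]
    [Fintype p] [DecidableEq p]
    (e : n × m ≃ p) (U : Matrix n n ℂ) (V : Matrix m m ℂ)
    (hU : Uᴴ * U = 1) (hU' : U * Uᴴ = 1) (hV : Vᴴ * V = 1) (hV' : V * Vᴴ = 1) :
    ((U ⊗ₖ V).submatrix e.symm id)ᴴ * ((U ⊗ₖ V).submatrix e.symm id) = 1 ∧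
    ((U ⊗ₖ V).submatrix e.symm id) * ((U ⊗ₖ V).submatrix e.symm id)ᴴ = 1 := by
  constructor
  · rw [Matrix.conjTranspose_submatrix, Matrix.submatrix_mul_equiv, Matrix.conjTranspose_kronecker,
      ← Matrix.mul_kronecker_mul, hU, hV, Matrix.one_kronecker_one, Matrix.submatrix_id_id]
  · rw [Matrix.conjTranspose_submatrix,
      ← Matrix.submatrix_mul _ _ _ _ _ Function.bijective_id, Matrix.conjTranspose_kronecker,
      ← Matrix.mul_kronecker_mul, hU', hV', Matrix.one_kronecker_one, Matrix.submatrix_one_equiv]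

theorem mpow_kron {n m p : Type*} [Fintype n] [DecidableEq n] [Fintype m] [DecidableEq m]
    [Fintype p] [DecidableEq p] (e : n × m ≃ p) {A : Matrix n n ℂ} {B : Matrix m m ℂ}
    (hA : A.PosSemidef) (hB : B.PosSemidef) (β : ℝ) :
    mpow (Matrix.reindex e e (A ⊗ₖ B)) β = Matrix.reindex e e (mpow A β ⊗ₖ mpow B β) := by
  obtain ⟨h1, h2⟩ := kron_unit e _ _ (eu1 hA.1) (eu2 hA.1) (eu1 hB.1) (eu2 hB.1)
  rw [mpow_spec _ _ (fun i => hA.1.eigenvalues i.1 * hB.1.eigenvalues i.2) h1 h2 ?_ β,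
    mpow_herm hA.1, mpow_herm hB.1, kron_spec]
  · simp only [fpow_mul β (hA.eigenvalues_nonneg _) (hB.eigenvalues_nonneg _)]
  · rw [← kron_spec, ← herm_spec, ← herm_spec]

theorem mpow_psd {n : Type*} [Fintype n] [DecidableEq n] {A : Matrix n n ℂ}
    (hA : A.PosSemidef) (β : ℝ) : (mpow A β).PosSemidef := by
  rw [mpow_herm hA.1]
  apply Matrix.PosSemidef.mul_mul_conjTranspose_same
  apply Matrix.PosSemidef.diagonal
  intro i
  simpa using fpow_nonneg β (hA.eigenvalues_nonneg i)

theorem sandwich_psd {n : Type*} [Fintype n] [DecidableEq n] {A B : Matrix n n ℂ}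
    (hA : A.PosSemidef) (hB : B.PosSemidef) (β : ℝ) :
    (mpow A β * B * mpow A β).PosSemidef := by
  have := hB.mul_mul_conjTranspose_same (mpow A β)
  rwa [(mpow_psd hA β).1.eq] at this

theorem geomMean_psd {n : Type*} [Fintype n] [DecidableEq n] {A B : Matrix n n ℂ}
    (hA : A.PosSemidef) (hB : B.PosSemidef) (β : ℝ) : (geomMean β A B).PosSemidef :=
  sandwich_psd hA (mpow_psd (sandwich_psd hA hB _) β) _

theorem reindex_mul3 {n p : Type*} [Fintype n] [Fintype p] (e : n ≃ p) (A B C : Matrix n n ℂ) :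
    Matrix.reindex e e A * Matrix.reindex e e B * Matrix.reindex e e C =
      Matrix.reindex e e (A * B * C) := by
  simp only [Matrix.reindex_apply, Matrix.submatrix_mul_equiv]

theorem geomMean_kron {n m p : Type*} [Fintype n] [DecidableEq n] [Fintype m] [DecidableEq m]
    [Fintype p] [DecidableEq p] (e : n × m ≃ p) {A C : Matrix n n ℂ} {B D : Matrix m m ℂ}
    (hA : A.PosSemidef) (hB : B.PosSemidef) (hC : C.PosSemidef) (hD : D.PosSemidef) (β : ℝ) :
    geomMean β (Matrix.reindex e e (A ⊗ₖ B)) (Matrix.reindex e e (C ⊗ₖ D)) =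
      Matrix.reindex e e (geomMean β A C ⊗ₖ geomMean β B D) := by
  unfold geomMean
  rw [mpow_kron e hA hB, mpow_kron e hA hB, reindex_mul3, ← Matrix.mul_kronecker_mul,
    ← Matrix.mul_kronecker_mul, mpow_kron e (sandwich_psd hA hC _) (sandwich_psd hB hD _),
    reindex_mul3, ← Matrix.mul_kronecker_mul, ← Matrix.mul_kronecker_mul]

theorem ptrB_psd {A B : Type*} [Fintype A] [Fintype B] {M : Matrix (A × B) (A × B) ℂ}
    (hM : M.PosSemidef) : (ptrB M).PosSemidef := by
  have : ptrB M = ∑ b, M.submatrix (fun a => (a, b)) (fun a => (a, b)) := by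
    ext a a'
    simp [ptrB, Matrix.sum_apply]
  rw [this]
  exact Matrix.posSemidef_sum _ (fun b _ => hM.submatrix _)

theorem ptrB_kron {A₁ B₁ A₂ B₂ : Type*} [Fintype B₁] [Fintype B₂]
    (M : Matrix (A₁ × B₁) (A₁ × B₁) ℂ) (N : Matrix (A₂ × B₂) (A₂ × B₂) ℂ) :
    ptrB (Matrix.reindex (Equiv.prodProdProdComm A₁ B₁ A₂ B₂)
          (Equiv.prodProdProdComm A₁ B₁ A₂ B₂) (M ⊗ₖ N)) = ptrB M ⊗ₖ ptrB N := by
  ext ⟨a, b⟩ ⟨a', b'⟩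
  simp [ptrB, Fintype.sum_prod_type, Finset.sum_mul_sum]

theorem iSup_mul_prod {n m : Type*} [Finite n] [Finite m] (d : n → ℝ) (c : m → ℝ)
    (hd : ∀ i, 0 ≤ d i) (hc : ∀ i, 0 ≤ c i) :
    (⨆ i : n × m, d i.1 * c i.2) = (⨆ i, d i) * ⨆ j, c j := by
  apply le_antisymm
  · refine Real.iSup_le (fun i => ?_) (mul_nonneg (Real.iSup_nonneg hd) (Real.iSup_nonneg hc))
    exact mul_le_mul (le_ciSup (Set.finite_range d).bddAbove _)
      (le_ciSup (Set.finite_range c).bddAbove _) (hc _) (Real.iSup_nonneg hd)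
  · have h0 : 0 ≤ (⨆ i : n × m, d i.1 * c i.2) :=
      Real.iSup_nonneg (fun i => mul_nonneg (hd _) (hc _))
    rw [Real.iSup_mul_of_nonneg (Real.iSup_nonneg hc)]
    refine Real.iSup_le (fun i => ?_) h0
    rw [Real.mul_iSup_of_nonneg (hd i)]
    refine Real.iSup_le (fun j => ?_) h0
    exact le_ciSup (f := fun i : n × m => d i.1 * c i.2) (Set.finite_range _).bddAbove (i, j)

theorem lamMax_kron {n m : Type*} [Fintype n] [DecidableEq n] [Fintype m] [DecidableEq m]
    {A : Matrix n n ℂ} {B : Matrix m m ℂ} (hA : A.PosSemidef) (hB : B.PosSemidef) :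
    lamMax (A ⊗ₖ B) = lamMax A * lamMax B := by
  obtain ⟨h1, h2⟩ := kron_unit (Equiv.refl _) _ _ (eu1 hA.1) (eu2 hA.1) (eu1 hB.1) (eu2 hB.1)
  rw [lamMax_spec _ _ (fun i => hA.1.eigenvalues i.1 * hB.1.eigenvalues i.2) h1 h2 ?_,
    lamMax_spec A _ _ (eu1 hA.1) (eu2 hA.1) (herm_spec hA.1),
    lamMax_spec B _ _ (eu1 hB.1) (eu2 hB.1) (herm_spec hB.1),
    iSup_mul_prod _ _ hA.eigenvalues_nonneg hB.eigenvalues_nonneg]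
  rw [← kron_spec, ← herm_spec, ← herm_spec]
  simp

/-- additivity of the geometric Rényi channel divergence under tensor
products of channels, in terms of Choi matrices:
`λ_max(tr_{B₁×B₂} G_{1−α}(Ĵ, K̂)) = λ_max(tr_{B₁} G_{1−α}(J₁,K₁)) · λ_max(tr_{B₂} G_{1−α}(J₂,K₂))`. -/
theorem channel_divergence_additivity {A₁ B₁ A₂ B₂ : Type*}
    [Fintype A₁] [DecidableEq A₁] [Fintype B₁] [DecidableEq B₁]
    [Fintype A₂] [DecidableEq A₂] [Fintype B₂] [DecidableEq B₂]
    (J₁ K₁ : Matrix (A₁ × B₁) (A₁ × B₁) ℂ) (hJ₁ : J₁.PosSemidef) (hK₁ : K₁.PosSemidef)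
    (J₂ K₂ : Matrix (A₂ × B₂) (A₂ × B₂) ℂ) (hJ₂ : J₂.PosSemidef) (hK₂ : K₂.PosSemidef)
    (α : ℝ) (hα1 : 1 < α) (hα2 : α ≤ 2) :
    lamMax (ptrB (geomMean (1 - α)
        (Matrix.reindex (Equiv.prodProdProdComm A₁ B₁ A₂ B₂)
          (Equiv.prodProdProdComm A₁ B₁ A₂ B₂) (J₁ ⊗ₖ J₂))
        (Matrix.reindex (Equiv.prodProdProdComm A₁ B₁ A₂ B₂)
          (Equiv.prodProdProdComm A₁ B₁ A₂ B₂) (K₁ ⊗ₖ K₂)))) =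
      lamMax (ptrB (geomMean (1 - α) J₁ K₁)) * lamMax (ptrB (geomMean (1 - α) J₂ K₂)) := by
  rw [geomMean_kron _ hJ₁ hJ₂ hK₁ hK₂, ptrB_kron]
  exact lamMax_kron (ptrB_psd (geomMean_psd hJ₁ hK₁ _)) (ptrB_psd (geomMean_psd hJ₂ hK₂ _))
end
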